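/- If μ is a Carleson measure for the Dirichlet space 𝒟(ℂ₊), then there exists C(μ) > 0 such that for all a ∈ ℂ₊: ∫_{ℂ₊} ( μ(Q(a) ∩ Q(z)) / (e^{Re z} Re z) )² dz ≤ C(μ) μ(Q(a)). -/

import Mathlib

open MeasureTheory Set
open scoped ENNReal

/-- The Laplace transform. -/
noncomputable def laplace (f : ℝ → ℂ) (z : ℂ) : ℂ :=
  ∫ t in Ioi (0 : ℝ), f t * Complex.exp (-z * t)

/-- The Carleson square centred at `a ∈ ℂ₊`. -/
def carlesonSquare (a : ℂ) : Set ℂ :=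
  {z : ℂ | 0 < z.re ∧ z.re ≤ 2 * a.re ∧ |z.im - a.im| ≤ a.re}

open scoped FourierTransform SchwartzMap ContDiff

theorem aux_plancherel (f : ℝ → ℂ) (h1 : Integrable f) (h2 : MemLp f 2) :
    ∫⁻ x, ‖𝓕 f x‖ₑ ^ 2 = ∫⁻ x, ‖f x‖ₑ ^ 2 := by
  have hcont : Continuous (𝓕 f) := VectorFourier.fourierIntegral_continuous
    Real.continuous_fourierChar (by exact continuous_inner) h1
  set g : Lp ℂ 2 (volume : Measure ℝ) := h2.toLp f with hg
  have hae : ∀ᵐ x, (𝓕 g : Lp ℂ 2 (volume : Measure ℝ)) x = 𝓕 f x := by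
    apply ae_eq_of_integral_contDiff_smul_eq
    · exact (Lp.memLp _).locallyIntegrable (by norm_num)
    · exact hcont.locallyIntegrable
    · intro φ φs φc
      have hg₁ : HasCompactSupport (Complex.ofRealCLM ∘ φ) := φc.comp_left rfl
      have hg₂ : ContDiff ℝ ∞ (Complex.ofRealCLM ∘ φ) := by fun_prop
      set ψ : 𝓢(ℝ, ℂ) := hg₁.toSchwartzMap hg₂ with hψ
      have e1 := congrArg (fun T => T ψ) (Lp.fourier_toTemperedDistribution_eq g)
      simp only [TemperedDistribution.fourier_apply, Lp.toTemperedDistribution_apply] at e1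
      have e2 : ∫ x, φ x • (𝓕 g : Lp ℂ 2 (volume : Measure ℝ)) x
          = ∫ x, ψ x • (𝓕 g : Lp ℂ 2 (volume : Measure ℝ)) x := by
        congr 1
      have e3 : ∫ x, φ x • 𝓕 f x = ∫ x, ψ x • 𝓕 f x := by
        congr 1
      rw [e2, e3, ← e1]
      have e4 : ∫ x, (𝓕 ψ) x • g x = ∫ x, (𝓕 ψ) x • f x := by
        apply integral_congr_ae
        filter_upwards [h2.coeFn_toLp] with x hx
        rw [hx]
      rw [e4]
      have := VectorFourier.integral_fourierIntegral_smul_eq_flip (μ := volume) (ν := volume)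
        (L := innerₗ ℝ) Real.continuous_fourierChar (by exact continuous_inner) ψ.integrable h1
      rw [flip_innerₗ] at this
      exact this
  have hn : ‖(𝓕 g : Lp ℂ 2 (volume : Measure ℝ))‖ = ‖g‖ := Lp.norm_fourier_eq g
  have key : eLpNorm (𝓕 f) 2 volume = eLpNorm f 2 volume := by
    rw [← eLpNorm_congr_ae hae, ← eLpNorm_congr_ae h2.coeFn_toLp]
    rw [Lp.norm_def, Lp.norm_def] at hn
    exact (ENNReal.toReal_eq_toReal_iff' (Lp.eLpNorm_ne_top _) (Lp.eLpNorm_ne_top _)).1 hn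
  have := congrArg (fun u => u ^ (2:ℝ)) key
  simp only [eLpNorm_eq_lintegral_rpow_enorm_toReal (two_ne_zero) (ENNReal.ofNat_ne_top)] at this
  simp only [← ENNReal.rpow_mul] at this
  simpa using this

noncomputable def gG (ν : Measure ℂ) (t : ℝ) : ℂ :=
  ∫ ζ, Complex.exp (-(starRingEnd ℂ ζ) * t) ∂ν

theorem gG_sm (ν : Measure ℂ) [IsFiniteMeasure ν] : StronglyMeasurable (gG ν) := by
  have : StronglyMeasurable (fun p : ℝ × ℂ => Complex.exp (-(starRingEnd ℂ p.2) * p.1)) := by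
    apply Continuous.stronglyMeasurable
    have := Complex.continuous_conj
    fun_prop
  exact this.integral_prod_right'

theorem gG_bound (ν : Measure ℂ) [IsFiniteMeasure ν] (h : ∀ᵐ ζ ∂ν, 0 < ζ.re) (t : ℝ) (ht : 0 < t) :
    ‖gG ν t‖ ≤ ν.real univ := by
  have := norm_integral_le_of_norm_le_const (μ := ν) (C := 1)
    (f := fun ζ => Complex.exp (-(starRingEnd ℂ ζ) * t)) (by
      filter_upwards [h] with ζ hζ
      rw [Complex.norm_exp]
      simp
      positivity)
  simpa [gG] using this

theorem laplace_sm (f : ℝ → ℂ) (hf : StronglyMeasurable f) : StronglyMeasurable (laplace f) := by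
  have : StronglyMeasurable (fun p : ℂ × ℝ => f p.2 * Complex.exp (-p.1 * p.2)) := by
    apply StronglyMeasurable.mul
    · exact hf.comp_measurable measurable_snd
    · apply Continuous.stronglyMeasurable
      fun_prop
  exact this.integral_prod_right'

theorem laplace_exp (z w : ℂ) (h : 0 < (z + w).re) :
    ∫ t in Ioi (0 : ℝ), Complex.exp (-w * t) * Complex.exp (-z * t) = 1 / (z + w) := by
  have : ∀ t : ℝ, Complex.exp (-w * t) * Complex.exp (-z * t) = Complex.exp (-(z + w) * t) := by
    intro t; rw [← Complex.exp_add]; ring_nf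
  simp only [this]
  rw [integral_exp_mul_complex_Ioi (by rw [Complex.neg_re]; linarith)]
  simp only [Complex.ofReal_zero, mul_zero, Complex.exp_zero]
  rw [neg_div_neg_eq]

theorem laplace_gG (ν : Measure ℂ) [IsFiniteMeasure ν] (h : ∀ᵐ ζ ∂ν, 0 < ζ.re)
    (z : ℂ) (hz : 0 < z.re) :
    Integrable (fun ζ => 1 / (z + starRingEnd ℂ ζ)) ν ∧
    laplace (gG ν) z = ∫ ζ, 1 / (z + starRingEnd ℂ ζ) ∂ν := by
  have hI : Integrable (fun p : ℝ × ℂ => Complex.exp (-(starRingEnd ℂ p.2) * p.1) *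
      Complex.exp (-z * p.1)) ((volume.restrict (Ioi (0:ℝ))).prod ν) := by
    have h1 := Integrable.mul_prod (ν := ν)
      (integrableOn_exp_mul_complex_Ioi (a := -z) (by simpa using hz) 0)
      (integrable_const (1:ℂ))
    refine h1.mono ?_ ?_
    · apply Continuous.aestronglyMeasurable
      have := Complex.continuous_conj
      fun_prop
    · have a1 := Measure.quasiMeasurePreserving_snd (μ := volume.restrict (Ioi (0:ℝ))) (ν := ν) |>.ae h
      have a2 := Measure.quasiMeasurePreserving_fst (μ := volume.restrict (Ioi (0:ℝ))) (ν := ν) |>.ae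
        (ae_restrict_mem measurableSet_Ioi)
      filter_upwards [a1, a2] with p hp1 hp2
      simp only [norm_mul, mul_one]
      apply mul_le_of_le_one_left (norm_nonneg _)
      rw [Complex.norm_exp]
      have hp2 : 0 < p.1 := hp2
      simp
      positivity
  have e : ∀ᵐ ζ ∂ν, (∫ t in Ioi (0 : ℝ), Complex.exp (-(starRingEnd ℂ ζ) * t) *
      Complex.exp (-z * t)) = 1 / (z + starRingEnd ℂ ζ) := by
    filter_upwards [h] with ζ hζ
    exact laplace_exp _ _ (by simp; positivity)
  constructor
  · exact hI.integral_prod_right.congr e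
  · rw [← integral_congr_ae e]
    unfold laplace gG
    simp_rw [← integral_mul_const]
    exact integral_integral_swap hI

theorem laplace_lower (ν : Measure ℂ) [IsFiniteMeasure ν] (h : ∀ᵐ ζ ∂ν, 0 < ζ.re)
    (z : ℂ) (hz : 0 < z.re) :
    ν.real (carlesonSquare z) / (10 * z.re) ≤ ‖laplace (gG ν) z‖ := by
  obtain ⟨hI, he⟩ := laplace_gG ν h z hz
  have hm : MeasurableSet (carlesonSquare z) := by
    unfold carlesonSquare
    measurability
  refine le_trans ?_ (Complex.re_le_norm _)
  rw [he]
  have : (∫ ζ, 1 / (z + starRingEnd ℂ ζ) ∂ν).re = ∫ ζ, (1 / (z + starRingEnd ℂ ζ)).re ∂ν :=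
    (integral_re (𝕜 := ℂ) hI).symm
  rw [this]
  have hform : ∀ ζ : ℂ, (1 / (z + starRingEnd ℂ ζ)).re
      = (z.re + ζ.re) / ((z.re + ζ.re)^2 + (z.im - ζ.im)^2) := by
    intro ζ
    simp [Complex.inv_re, Complex.normSq_apply]
    ring
  calc ν.real (carlesonSquare z) / (10 * z.re)
      = ∫ ζ in carlesonSquare z, 1 / (10 * z.re) ∂ν := by
        simp; ring
    _ ≤ ∫ ζ in carlesonSquare z, (1 / (z + starRingEnd ℂ ζ)).re ∂ν := by
        apply setIntegral_mono_on (integrable_const _) hI.re.integrableOn hm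
        rintro ζ ⟨h1, h2, h3⟩
        simp only [RCLike.re_to_complex]
        rw [hform, div_le_div_iff₀ (by positivity) (by positivity)]
        have : (ζ.im - z.im)^2 ≤ z.re ^ 2 := sq_le_sq' (abs_le.1 h3).1 (abs_le.1 h3).2
        nlinarith
    _ ≤ _ := by
        apply setIntegral_le_integral hI.re
        filter_upwards [h] with ζ hζ
        simp only [RCLike.re_to_complex]
        rw [hform]
        simp
        positivity

theorem aux_dual (ν : Measure ℂ) [IsFiniteMeasure ν] (h : ∀ᵐ ζ ∂ν, 0 < ζ.re) (C : ℝ) (hC : 0 < C)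
    (hCarleson : ∀ f : ℝ → ℂ,
      AEStronglyMeasurable f (volume.restrict (Ioi (0 : ℝ))) →
      IntegrableOn (fun t => ‖f t‖ ^ 2 * (1 + t)) (Ioi (0 : ℝ)) volume →
      ∫⁻ z, ‖laplace f z‖₊ ^ 2 ∂ν ≤
        ENNReal.ofReal (C * ∫ t in Ioi (0 : ℝ), ‖f t‖ ^ 2 * (1 + t))) (T : ℝ) :
    Integrable (fun t => ‖gG ν t‖ ^ 2 / (1 + t)) (volume.restrict (Ioc 0 T)) ∧
    ∫ t in Ioc 0 T, ‖gG ν t‖ ^ 2 / (1 + t) ≤ C * ν.real univ := by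
  set m := (volume : Measure ℝ).restrict (Ioc 0 T) with hm
  have hmm : m = (volume.restrict (Ioi 0)).restrict (Iic T) := by
    rw [hm, Measure.restrict_restrict measurableSet_Iic, inter_comm, Ioi_inter_Iic]
  have hpos : ∀ᵐ t ∂m, 0 < t := by
    filter_upwards [ae_restrict_mem measurableSet_Ioc] with t ht using ht.1
  have hGm := gG_sm ν
  have hInt : Integrable (fun t => ‖gG ν t‖ ^ 2 / (1 + t)) m := by
    refine Integrable.of_bound (C := ν.real univ ^ 2) ?_ ?_
    · have := hGm.measurable
      exact (show Measurable (fun t => ‖gG ν t‖ ^ 2 / (1 + t)) by fun_prop).aestronglyMeasurable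
    · filter_upwards [hpos] with t ht
      have := gG_bound ν h t ht
      rw [Real.norm_of_nonneg (by positivity)]
      calc _ ≤ ‖gG ν t‖ ^ 2 := div_le_self (by positivity) (by linarith)
        _ ≤ _ := by gcongr
  refine ⟨hInt, ?_⟩
  set f : ℝ → ℂ := (Iic T).indicator (fun t => gG ν t / (1 + t)) with hf
  have hfm : StronglyMeasurable f := by
    apply StronglyMeasurable.indicator _ measurableSet_Iic
    exact (hGm.measurable.div (by fun_prop)).stronglyMeasurable
  set I := ∫ t, ‖gG ν t‖ ^ 2 / (1 + t) ∂m with hI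
  have hfeq : ∀ t ∈ Ioi (0:ℝ), ‖f t‖ ^ 2 * (1 + t) =
      (Iic T).indicator (fun t => ‖gG ν t‖ ^ 2 / (1 + t)) t := by
    intro t ht
    have ht : 0 < t := ht
    by_cases hT : t ∈ Iic T
    · simp only [hf, indicator_of_mem hT]
      have : ‖(1 + t : ℂ)‖ = 1 + t := by
        have : (1 + t : ℂ) = ((1 + t : ℝ) : ℂ) := by push_cast; rfl
        rw [this, Complex.norm_real, Real.norm_of_nonneg (by positivity)]
      rw [norm_div, this]
      field_simp
    · simp [hf, indicator_of_notMem hT]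
  have hfI : ∫ t in Ioi (0 : ℝ), ‖f t‖ ^ 2 * (1 + t) = I := by
    rw [setIntegral_congr_fun measurableSet_Ioi hfeq, integral_indicator measurableSet_Iic, ← hmm]
  have hCf := hCarleson f hfm.aestronglyMeasurable (by
    refine IntegrableOn.congr_fun ?_ (fun t ht => (hfeq t ht).symm) measurableSet_Ioi
    rw [IntegrableOn, integrable_indicator_iff measurableSet_Iic, IntegrableOn, ← hmm]
    exact hInt)
  rw [hfI] at hCf
  have hL : ∀ z, laplace f z = ∫ t, gG ν t / (1 + t) * Complex.exp (-z * t) ∂m := by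
    intro z
    rw [hmm, ← integral_indicator measurableSet_Iic]
    unfold laplace
    congr 1
    ext t
    by_cases hT : t ∈ Iic T
    · simp [hf, indicator_of_mem hT]
    · simp [hf, indicator_of_notMem hT]
  have hprod : Integrable (fun p : ℂ × ℝ => gG ν p.2 / (1 + p.2) * Complex.exp (-p.1 * p.2))
      (ν.prod m) := by
    apply Integrable.of_bound (C := ν.real univ)
    · apply StronglyMeasurable.aestronglyMeasurable
      apply Measurable.stronglyMeasurable
      have := hGm.measurable
      fun_prop
    · have a1 := Measure.quasiMeasurePreserving_fst (μ := ν) (ν := m) |>.ae h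
      have a2 := Measure.quasiMeasurePreserving_snd (μ := ν) (ν := m) |>.ae hpos
      filter_upwards [a1, a2] with p hp1 hp2
      have h1 := gG_bound ν h _ hp2
      have h2 : ‖(1 + p.2 : ℂ)‖ = 1 + p.2 := by
        have : (1 + p.2 : ℂ) = ((1 + p.2 : ℝ) : ℂ) := by push_cast; rfl
        rw [this, Complex.norm_real, Real.norm_of_nonneg (by positivity)]
      have h3 : ‖Complex.exp (-p.1 * p.2)‖ ≤ 1 := by
        rw [Complex.norm_exp]
        simp
        positivity
      rw [norm_mul, norm_div, h2]
      calc _ ≤ ‖gG ν p.2‖ * 1 := by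
            gcongr
            exact div_le_self (by positivity) (by linarith)
        _ ≤ _ := by simpa using h1
  have hLint : Integrable (laplace f) ν := by
    refine hprod.integral_prod_left.congr (Filter.Eventually.of_forall fun z => (hL z).symm)
  have hLI : ∫ z, laplace f z ∂ν = (I : ℂ) := by
    simp_rw [hL]
    rw [integral_integral_swap hprod, hI, ← integral_complex_ofReal]
    congr 1
    ext t
    rw [integral_const_mul]
    have : ∫ z, Complex.exp (-z * t) ∂ν = starRingEnd ℂ (gG ν t) := by
      unfold gG
      rw [← integral_conj]
      congr 1
      ext z
      rw [← Complex.exp_conj]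
      simp
    rw [this, div_mul_eq_mul_div, Complex.mul_conj, Complex.normSq_eq_norm_sq]
    push_cast
    rfl
  have hI0 : 0 ≤ I := by
    apply integral_nonneg_of_ae
    filter_upwards [hpos] with t ht
    simp
    positivity
  have hCf' : ∫⁻ z, ENNReal.ofReal (‖laplace f z‖ ^ 2) ∂ν ≤ ENNReal.ofReal (C * I) := by
    convert hCf using 3 with z
    rw [ENNReal.ofReal_pow (norm_nonneg _), ofReal_norm]
    rfl
  have hsqm : AEStronglyMeasurable (fun z => ‖laplace f z‖ ^ 2) ν :=
    ((laplace_sm f hfm).measurable.norm.pow_const 2).aestronglyMeasurable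
  have hsq : Integrable (fun z => ‖laplace f z‖ ^ 2) ν := by
    refine ⟨hsqm, ?_⟩
    rw [hasFiniteIntegral_iff_ofReal (Filter.Eventually.of_forall fun z => by positivity)]
    exact hCf'.trans_lt ENNReal.ofReal_lt_top
  have hsq2 : ∫ z, ‖laplace f z‖ ^ 2 ∂ν ≤ C * I := by
    rw [integral_eq_lintegral_of_nonneg_ae (Filter.Eventually.of_forall fun z => by positivity) hsqm]
    exact ENNReal.toReal_le_of_le_ofReal (by positivity) hCf'
  have h1 : I ≤ ∫ z, ‖laplace f z‖ ∂ν := by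
    have := norm_integral_le_integral_norm (μ := ν) (laplace f)
    rwa [hLI, Complex.norm_real, Real.norm_of_nonneg hI0] at this
  have h2 : ∫ z, ‖laplace f z‖ ∂ν ≤ ∫ z, (C / 2 + 1 / (2 * C) * ‖laplace f z‖ ^ 2) ∂ν := by
    apply integral_mono hLint.norm ((integrable_const _).add (hsq.const_mul _))
    intro z
    have : C / 2 + 1 / (2 * C) * ‖laplace f z‖ ^ 2 - ‖laplace f z‖ =
      1 / (2 * C) * (‖laplace f z‖ - C) ^ 2 := by field_simp; ring
    have h0 : 0 ≤ 1 / (2 * C) * (‖laplace f z‖ - C) ^ 2 := by positivity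
    show ‖laplace f z‖ ≤ C / 2 + 1 / (2 * C) * ‖laplace f z‖ ^ 2
    linarith
  rw [integral_add (integrable_const _) (hsq.const_mul _), integral_const_mul, integral_const,
    smul_eq_mul] at h2
  have h3 : 1 / (2 * C) * ∫ z, ‖laplace f z‖ ^ 2 ∂ν ≤ I / 2 := by
    calc _ ≤ 1 / (2 * C) * (C * I) := by gcongr
      _ = I / 2 := by field_simp
  linarith

theorem aux_dual' (ν : Measure ℂ) [IsFiniteMeasure ν] (h : ∀ᵐ ζ ∂ν, 0 < ζ.re) (C : ℝ) (hC : 0 < C)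
    (hCarleson : ∀ f : ℝ → ℂ,
      AEStronglyMeasurable f (volume.restrict (Ioi (0 : ℝ))) →
      IntegrableOn (fun t => ‖f t‖ ^ 2 * (1 + t)) (Ioi (0 : ℝ)) volume →
      ∫⁻ z, ‖laplace f z‖₊ ^ 2 ∂ν ≤
        ENNReal.ofReal (C * ∫ t in Ioi (0 : ℝ), ‖f t‖ ^ 2 * (1 + t))) :
    ∫⁻ t in Ioi 0, ENNReal.ofReal (‖gG ν t‖ ^ 2 / (1 + t)) ≤ ENNReal.ofReal (C * ν.real univ) := by
  have hU : Ioi (0:ℝ) = ⋃ n : ℕ, Ioc 0 (n:ℝ) := by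
    ext t
    simp only [mem_Ioi, mem_iUnion, mem_Ioc]
    constructor
    · intro ht
      obtain ⟨n, hn⟩ := exists_nat_ge t
      exact ⟨n, ht, hn⟩
    · rintro ⟨n, h, -⟩; exact h
  rw [hU, setLIntegral_iUnion_of_directed]
  · apply iSup_le
    intro n
    obtain ⟨h1, h2⟩ := aux_dual ν h C hC hCarleson n
    rw [← ofReal_integral_eq_lintegral_ofReal h1]
    · exact ENNReal.ofReal_le_ofReal h2
    · filter_upwards [ae_restrict_mem measurableSet_Ioc] with t ht
      have := ht.1
      simp
      positivity
  · apply Monotone.directed_le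
    intro i j hij
    apply Ioc_subset_Ioc_right
    exact_mod_cast hij

theorem aux_fiber (ν : Measure ℂ) [IsFiniteMeasure ν] (h : ∀ᵐ ζ ∂ν, 0 < ζ.re) (x : ℝ) (hx : 0 < x) :
    ∫⁻ y : ℝ, ‖laplace (gG ν) (Complex.mk x y)‖ₑ ^ 2 = ENNReal.ofReal (2 * Real.pi) *
      ∫⁻ t in Ioi (0:ℝ), ‖gG ν t‖ₑ ^ 2 * ENNReal.ofReal (Real.exp (-(2 * x * t))) := by
  have hGm := gG_sm ν
  set k : ℝ → ℂ := (Ioi 0).indicator (fun t => gG ν t * Complex.exp (-x * t)) with hk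
  have hkm : StronglyMeasurable k := by
    apply StronglyMeasurable.indicator _ measurableSet_Ioi
    apply Measurable.stronglyMeasurable
    have := hGm.measurable
    fun_prop
  have hkb : ∀ t, ‖k t‖ ≤ ν.real univ := by
    intro t
    by_cases ht : t ∈ Ioi 0
    · simp only [hk, indicator_of_mem ht]
      rw [norm_mul]
      have ht : 0 < t := ht
      have h3 : ‖Complex.exp (-x * t)‖ ≤ 1 := by
        rw [Complex.norm_exp]
        simp
        positivity
      calc _ ≤ ν.real univ * 1 := by
            gcongr
            exact gG_bound ν h t ht
        _ = _ := mul_one _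
    · simp [hk, indicator_of_notMem ht]
  have hk1 : Integrable k := by
    rw [hk, integrable_indicator_iff measurableSet_Ioi]
    have := (integrableOn_exp_mul_complex_Ioi (a := -x) (by simpa using hx) 0)
    refine Integrable.bdd_mul (c := ν.real univ) this hGm.aestronglyMeasurable ?_
    filter_upwards [ae_restrict_mem measurableSet_Ioi] with t ht using gG_bound ν h t ht
  have hk2 : MemLp k 2 := by
    rw [memLp_two_iff_integrable_sq_norm hkm.aestronglyMeasurable]
    simp_rw [sq]
    refine Integrable.bdd_mul (c := ν.real univ) hk1.norm hkm.norm.aestronglyMeasurable ?_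
    filter_upwards with t
    simpa using hkb t
  have hP := aux_plancherel k hk1 hk2
  have hF : ∀ ξ : ℝ, 𝓕 k ξ = laplace (gG ν) (Complex.mk x (2 * Real.pi * ξ)) := by
    intro ξ
    rw [Real.fourier_real_eq_integral_exp_smul]
    unfold laplace
    rw [← integral_indicator measurableSet_Ioi]
    congr 1
    ext t
    by_cases ht : t ∈ Ioi 0
    · simp only [hk, indicator_of_mem ht]
      rw [smul_eq_mul, mul_left_comm, ← Complex.exp_add]
      congr 2
      apply Complex.ext <;> simp <;> ring
    · simp [hk, indicator_of_notMem ht]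
  have hm : Measurable (fun y : ℝ => ‖laplace (gG ν) (Complex.mk x y)‖ₑ ^ 2) := by
    have := (laplace_sm _ hGm).measurable
    have h2 : Measurable (fun y : ℝ => Complex.mk x y) := by
      have : (fun y : ℝ => Complex.mk x y) = fun y : ℝ => (x : ℂ) + y * Complex.I := by
        ext y
        apply Complex.ext <;> simp
      rw [this]
      fun_prop
    exact (this.comp h2).enorm.pow_const 2
  have hpi : (2 * Real.pi) ≠ 0 := by positivity
  calc _ = ∫⁻ y, ‖laplace (gG ν) (Complex.mk x y)‖ₑ ^ 2
        ∂(ENNReal.ofReal |2 * Real.pi| • Measure.map (2 * Real.pi * ·) volume) := by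
        rw [Real.smul_map_volume_mul_left hpi]
    _ = ENNReal.ofReal (2 * Real.pi) * ∫⁻ ξ, ‖𝓕 k ξ‖ₑ ^ 2 := by
        rw [lintegral_smul_measure, lintegral_map hm (by fun_prop), abs_of_pos (by positivity)]
        simp_rw [hF]
        rfl
    _ = _ := by
        rw [hP, ← lintegral_indicator measurableSet_Ioi]
        congr 2
        ext t
        by_cases ht : t ∈ Ioi 0
        · simp only [hk, indicator_of_mem ht]
          rw [enorm_mul, mul_pow]
          congr 1
          rw [← ofReal_norm, Complex.norm_exp, ← ENNReal.ofReal_pow (by positivity),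
            ← Real.exp_nat_mul]
          simp
          ring_nf
        · simp [hk, indicator_of_notMem ht]

theorem aux_exp (c : ℝ) (hc : 0 < c) :
    ∫⁻ x in Ioi (0:ℝ), ENNReal.ofReal (Real.exp (-c * x)) = ENNReal.ofReal (1 / c) := by
  rw [← ofReal_integral_eq_lintegral_ofReal (integrableOn_exp_mul_Ioi (by linarith) 0)]
  · rw [integral_exp_mul_Ioi (by linarith)]
    simp
  · filter_upwards with t
    positivity

theorem aux_area (ν : Measure ℂ) [IsFiniteMeasure ν] (h : ∀ᵐ ζ ∂ν, 0 < ζ.re) :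
    ∫⁻ z in {z : ℂ | 0 < z.re}, ‖laplace (gG ν) z‖ₑ ^ 2 * ENNReal.ofReal (Real.exp (-(2 * z.re)))
     = ENNReal.ofReal Real.pi * ∫⁻ t in Ioi 0, ENNReal.ofReal (‖gG ν t‖ ^ 2 / (1 + t)) := by
  have hGm := (gG_sm ν).measurable
  have hLm := (laplace_sm _ (gG_sm ν)).measurable
  have hset : MeasurableSet {z : ℂ | 0 < z.re} := measurableSet_lt measurable_const Complex.measurable_re
  have e0 := Complex.volume_preserving_equiv_real_prod.symm.restrict_preimage hset
  have e1 : Complex.measurableEquivRealProd.symm ⁻¹' {z : ℂ | 0 < z.re} = Ioi (0:ℝ) ×ˢ univ := by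
    ext p; simp [Complex.measurableEquivRealProd]
  rw [e1] at e0
  rw [← e0.lintegral_comp (by fun_prop), Measure.volume_eq_prod, ← Measure.prod_restrict,
    Measure.restrict_univ, lintegral_prod]
  · simp only [Complex.measurableEquivRealProd_symm_apply]
    have : ∀ x ∈ Ioi (0:ℝ), ∫⁻ y : ℝ, ‖laplace (gG ν) (Complex.mk x y)‖ₑ ^ 2 *
        ENNReal.ofReal (Real.exp (-(2 * x))) =
        ∫⁻ t in Ioi (0:ℝ), ENNReal.ofReal (2 * Real.pi) * (‖gG ν t‖ₑ ^ 2 *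
          ENNReal.ofReal (Real.exp (-(2 * (1 + t)) * x))) := by
      intro x hx
      rw [lintegral_mul_const' _ _ ENNReal.ofReal_ne_top, aux_fiber ν h x hx,
        lintegral_const_mul' _ _ ENNReal.ofReal_ne_top, mul_assoc,
        ← lintegral_mul_const' _ _ ENNReal.ofReal_ne_top]
      congr 2
      ext t
      rw [mul_assoc, ← ENNReal.ofReal_mul (by positivity), ← Real.exp_add]
      ring_nf
    rw [setLIntegral_congr_fun measurableSet_Ioi this, lintegral_lintegral_swap,
      ← lintegral_const_mul' _ _ ENNReal.ofReal_ne_top]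
    · apply setLIntegral_congr_fun measurableSet_Ioi
      intro t ht
      have ht : 0 < t := ht
      simp only
      rw [lintegral_const_mul' _ _ ENNReal.ofReal_ne_top, lintegral_const_mul' _ _ (by simp),
        aux_exp _ (by positivity), ← ofReal_norm, ← ENNReal.ofReal_pow (by positivity),
        ← ENNReal.ofReal_mul (by positivity), ← ENNReal.ofReal_mul (by positivity),
        ← ENNReal.ofReal_mul (by positivity)]
      congr 1
      field_simp
    · apply Measurable.aemeasurable
      fun_prop
  · apply Measurable.aemeasurable
    have := Complex.measurableEquivRealProd.symm.measurable
    fun_prop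

theorem aux_finite (μ : Measure ℂ) (C : ℝ)
    (hCarleson : ∀ f : ℝ → ℂ,
      AEStronglyMeasurable f (volume.restrict (Ioi (0 : ℝ))) →
      IntegrableOn (fun t => ‖f t‖ ^ 2 * (1 + t)) (Ioi (0 : ℝ)) volume →
      ∫⁻ z in {z : ℂ | 0 < z.re}, ‖laplace f z‖₊ ^ 2 ∂μ ≤
        ENNReal.ofReal (C * ∫ t in Ioi (0 : ℝ), ‖f t‖ ^ 2 * (1 + t)))
    (a : ℂ) (ha : 0 < a.re) (hm : MeasurableSet (carlesonSquare a)) :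
    μ (carlesonSquare a) < (⊤ : ℝ≥0∞) := by
  have hc : Continuous (fun t : ℝ => Complex.exp (-(starRingEnd ℂ a) * t)) := by fun_prop
  have key := hCarleson (fun t => Complex.exp (-(starRingEnd ℂ a) * t)) hc.aestronglyMeasurable (by
    have h1 := (integrableOn_exp_mul_Ioi (a := -a.re) (by linarith) 0).const_mul (1 + 1 / a.re)
    refine Integrable.mono' h1 (by apply Continuous.aestronglyMeasurable; fun_prop) ?_
    filter_upwards [ae_restrict_mem measurableSet_Ioi] with t ht
    have ht : 0 < t := ht
    rw [Real.norm_of_nonneg (by positivity), Complex.norm_exp, ← Real.exp_nat_mul]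
    have e1 : ((2:ℕ):ℝ) * (-(starRingEnd ℂ a) * (t:ℂ)).re = -a.re * t + -(a.re * t) := by
      simp; ring
    rw [e1, Real.exp_add, mul_comm (1 + 1 / a.re), mul_assoc]
    apply mul_le_mul_of_nonneg_left _ (by positivity)
    rw [Real.exp_neg, inv_mul_le_iff₀ (by positivity)]
    have h2 := Real.add_one_le_exp (a.re * t)
    have h3 : 1 ≤ Real.exp (a.re * t) := Real.one_le_exp (by positivity)
    have h4 : t ≤ Real.exp (a.re * t) * (1 / a.re) := by
      rw [mul_one_div, le_div_iff₀ ha]; linarith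
    linarith)
  have hlow : ∀ z ∈ carlesonSquare a, ENNReal.ofReal ((1 / (4 * a.re)) ^ 2) ≤
      (‖laplace (fun t => Complex.exp (-(starRingEnd ℂ a) * t)) z‖₊ : ℝ≥0∞) ^ 2 := by
    rintro z ⟨h1, h2, h3⟩
    unfold laplace
    rw [laplace_exp _ _ (by simp; positivity)]
    rw [ENNReal.ofReal_pow (by positivity)]
    gcongr
    rw [← enorm_eq_nnnorm, ← ofReal_norm]
    apply ENNReal.ofReal_le_ofReal
    rw [norm_div, norm_one]
    have hre : 0 < (z + starRingEnd ℂ a).re := by simp; positivity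
    have hne : 0 < ‖z + starRingEnd ℂ a‖ := hre.trans_le (Complex.re_le_norm _)
    apply one_div_le_one_div_of_le hne
    refine (Complex.norm_le_abs_re_add_abs_im _).trans ?_
    rw [abs_of_pos hre]
    simp only [Complex.add_re, Complex.conj_re, Complex.add_im, Complex.conj_im, ← sub_eq_add_neg]
    linarith
  have h5 : ENNReal.ofReal ((1 / (4 * a.re)) ^ 2) * μ (carlesonSquare a) < (⊤ : ℝ≥0∞) := by
    refine lt_of_le_of_lt ?_ (key.trans_lt ENNReal.ofReal_lt_top)
    rw [← setLIntegral_const]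
    refine (setLIntegral_mono' hm hlow).trans ?_
    exact lintegral_mono_set fun z hz => hz.1
  by_contra hcon
  rw [not_lt, top_le_iff] at hcon
  rw [hcon, ENNReal.mul_top (by simp; positivity)] at h5
  exact lt_irrefl _ h5

/-- If `μ` is a Carleson measure for the Dirichlet space `𝒟(ℂ₊)`, then there is `C' > 0`
such that for all `a ∈ ℂ₊`:
`∫_{ℂ₊} ( μ(Q(a) ∩ Q(z)) / (e^{Re z} Re z) )² dz ≤ C' μ(Q(a))`. -/
theorem stmt_13 (μ : Measure ℂ) (hμ : μ {z : ℂ | ¬ 0 < z.re} = 0)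
    (C : ℝ) (hC : 0 < C)
    (hCarleson : ∀ f : ℝ → ℂ,
      AEStronglyMeasurable f (volume.restrict (Ioi (0 : ℝ))) →
      IntegrableOn (fun t => ‖f t‖ ^ 2 * (1 + t)) (Ioi (0 : ℝ)) volume →
      ∫⁻ z in {z : ℂ | 0 < z.re}, ‖laplace f z‖₊ ^ 2 ∂μ ≤
        ENNReal.ofReal (C * ∫ t in Ioi (0 : ℝ), ‖f t‖ ^ 2 * (1 + t))) :
    ∃ C' : ℝ, 0 < C' ∧ ∀ a : ℂ, 0 < a.re →
      ∫ z in {z : ℂ | 0 < z.re},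
          ((μ (carlesonSquare a ∩ carlesonSquare z)).toReal /
            (Real.exp z.re * z.re)) ^ 2 ≤
        C' * (μ (carlesonSquare a)).toReal := by
  have hmeas : ∀ a, MeasurableSet (carlesonSquare a) := by
    intro a
    unfold carlesonSquare
    measurability
  refine ⟨100 * (Real.pi * C), by positivity, fun a ha => ?_⟩
  have hfin := aux_finite μ C hCarleson a ha (hmeas a)
  set ν := μ.restrict (carlesonSquare a) with hν
  have : IsFiniteMeasure ν := ⟨by simpa [hν] using hfin⟩
  have h : ∀ᵐ ζ ∂ν, 0 < ζ.re := by
    filter_upwards [ae_restrict_mem (hmeas a)] with ζ hζ using hζ.1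
  have hreal : ν.real univ = (μ (carlesonSquare a)).toReal := by
    simp [hν, Measure.real]
  have hd := aux_dual' ν h C hC (fun f h1 h2 => le_trans
    (lintegral_mono' (Measure.restrict_mono (fun z hz => hz.1) le_rfl) le_rfl) (hCarleson f h1 h2))
  have hA := aux_area ν h
  have hset : MeasurableSet {z : ℂ | 0 < z.re} :=
    measurableSet_lt measurable_const Complex.measurable_re
  by_cases hI : IntegrableOn (fun z : ℂ => ((μ (carlesonSquare a ∩ carlesonSquare z)).toReal /
            (Real.exp z.re * z.re)) ^ 2) {z : ℂ | 0 < z.re}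
  swap
  · rw [integral_undef hI]
    positivity
  rw [integral_eq_lintegral_of_nonneg_ae (Filter.Eventually.of_forall fun z => by positivity) hI.1]
  apply ENNReal.toReal_le_of_le_ofReal (by positivity)
  calc _ ≤ ∫⁻ z in {z : ℂ | 0 < z.re}, ENNReal.ofReal 100 * (‖laplace (gG ν) z‖ₑ ^ 2 *
        ENNReal.ofReal (Real.exp (-(2 * z.re)))) := by
        apply setLIntegral_mono' hset
        intro z hz
        have hz : 0 < z.re := hz
        have hl := laplace_lower ν h z hz
        have hνz : ν.real (carlesonSquare z) = (μ (carlesonSquare a ∩ carlesonSquare z)).toReal := by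
          rw [hν, Measure.real, Measure.restrict_apply (hmeas z), inter_comm]
        rw [hνz] at hl
        rw [← ofReal_norm, ← ENNReal.ofReal_pow (by positivity),
          ← ENNReal.ofReal_mul (by positivity), ← ENNReal.ofReal_mul (by positivity)]
        apply ENNReal.ofReal_le_ofReal
        set M := (μ (carlesonSquare a ∩ carlesonSquare z)).toReal with hM
        have hM0 : 0 ≤ M := ENNReal.toReal_nonneg
        have he : Real.exp (-(2 * z.re)) = (Real.exp z.re)⁻¹ ^ 2 := by
          rw [← Real.exp_neg, ← Real.exp_nat_mul]; congr 1; push_cast; ring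
        calc (M / (Real.exp z.re * z.re)) ^ 2
            = 100 * ((M / (10 * z.re)) ^ 2 * (Real.exp z.re)⁻¹ ^ 2) := by
              field_simp; ring
          _ ≤ _ := by
              rw [he]
              gcongr
    _ = ENNReal.ofReal 100 * (ENNReal.ofReal Real.pi *
        ∫⁻ t in Ioi 0, ENNReal.ofReal (‖gG ν t‖ ^ 2 / (1 + t))) := by
        rw [lintegral_const_mul' _ _ ENNReal.ofReal_ne_top, hA]
    _ ≤ ENNReal.ofReal 100 * (ENNReal.ofReal Real.pi * ENNReal.ofReal (C * ν.real univ)) := by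
        gcongr
    _ = _ := by
        rw [← ENNReal.ofReal_mul (by positivity), ← ENNReal.ofReal_mul (by positivity), hreal]
        congr 1
        ring
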